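/- arXiv:1705.04471 — 2 statements merged into one kernel-verified Lean document; each statement's English description precedes it below -/
import Mathlib

section
/- Let n = p₁⋯p_r ∈ A be square-free monic with distinct monic irreducible factors p_i, let ζ_i ∈ L be a fixed root of p_i, and let χ₁ := ∏_{i=1}^r χ_{ζ_i}^{j_i} and χ₂ := ∏_{i=1}^r χ_{ζ_i}^{k_i} be Dirichlet characters modulo n with 1 ≤ j_i, k_i < |p_i| − 1 for all i. Let χ₁χ₂ := ∏_{i=1}^r χ_{ζ_i}^{m_i}, where m_i ∈ {0, 1, …, |p_i| − 2} is the unique representative of j_i + k_i modulo |p_i| − 1. Then for every δ ∈ A with deg δ < deg n, the convolution sum ∑_{a ∈ A, deg a < deg n} χ₁(a)·χ₂(δ − a) equals (χ₁χ₂)(δ) · ∏_{i=1}^r (−1)^{1 − j_i} · C(k_i, |p_i| − 1 − j_i), where C(k, l) denotes the binomial coefficient (taken to be 0 when l > k) reduced into L, and (−1)^{1−j_i} is computed in L. -/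
/-!
By the Chinese remainder theorem, reduction modulo the `p i` identifies the polynomials of degree
less than `deg n` with `∏ i, 𝔽_{|p i|}`, so the convolution sum factors into one Jacobi sum over
each residue field. In the binomial expansion of the sum over `K` of `a ^ j * (d - a) ^ k`, the
power sums of `a ^ (j + l)` vanish unless `j + l = #K - 1`, so a single term survives.
-/

open Polynomial

noncomputable section

/-- The polynomial of degree `< d` with coefficient vector `c : Fin d → F`.
As `c` ranges over all of `Fin d → F`, this ranges exactly over the polynomials
of degree `< d` (each exactly once). -/
def toPoly {F : Type} [Field F] {d : ℕ} (c : Fin d → F) : Polynomial F :=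
  ∑ i : Fin d, Polynomial.C (c i) * Polynomial.X ^ (i : ℕ)

section PowerSums

variable {K : Type*} [Field K] [Fintype K]

theorem sum_pow_eq_ite (i : ℕ) :
    ∑ x : K, x ^ i = if i ≠ 0 ∧ Fintype.card K - 1 ∣ i then -1 else 0 := by
  classical
  rcases eq_or_ne i 0 with rfl | hi
  · simp
  · have hunits : ∑ x : K, x ^ i = ∑ x : Kˣ, (x : K) ^ i := by
      rw [Fintype.sum_eq_add_sum_subtype_ne _ 0, zero_pow hi, zero_add,
        ← unitsEquivNeZero.sum_comp]
      rfl
    simp only [hunits, FiniteField.sum_pow_units, ne_eq, hi, not_false_eq_true, true_and]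

theorem sum_pow_of_lt_two_mul {i : ℕ} (hi : i < 2 * (Fintype.card K - 1)) :
    ∑ x : K, x ^ i = if i = Fintype.card K - 1 then -1 else 0 := by
  have hiff : i ≠ 0 ∧ Fintype.card K - 1 ∣ i ↔ i = Fintype.card K - 1 := by
    refine ⟨fun ⟨h0, hdvd⟩ ↦ ?_, fun h ↦ ⟨by omega, h ▸ dvd_rfl⟩⟩
    exact Nat.eq_of_dvd_of_lt_two_mul h0 hdvd hi
  simp only [sum_pow_eq_ite, hiff]

theorem neg_one_pow_card_sub_one_sub {j : ℕ} (hj : j ≤ Fintype.card K - 1) :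
    (-1 : K) ^ (Fintype.card K - 1 - j) = (-1) ^ j := by
  have hprod : (-1 : K) ^ (Fintype.card K - 1 - j) * (-1) ^ j = 1 := by
    rw [pow_sub_mul_pow _ hj, FiniteField.pow_card_sub_one_eq_one _ (neg_ne_zero.mpr one_ne_zero)]
  rw [← inv_eq_of_mul_eq_one_left hprod, ← inv_pow, inv_neg_one]

end PowerSums

theorem sum_pow_mul_sub_pow_eq_sum_range {R : Type*} [CommRing R] [Fintype R] (j k : ℕ) (d : R) :
    ∑ a : R, a ^ j * (d - a) ^ k =
      ∑ l ∈ Finset.range (k + 1),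
        (-1) ^ l * d ^ (k - l) * (k.choose l : R) * ∑ a : R, a ^ (j + l) := by
  simp_rw [Finset.mul_sum]
  rw [Finset.sum_comm]
  refine Finset.sum_congr rfl fun a _ ↦ ?_
  rw [sub_eq_neg_add, add_pow, Finset.mul_sum]
  refine Finset.sum_congr rfl fun l _ ↦ ?_
  rw [neg_pow a l, pow_add]
  ring

theorem sum_pow_mul_sub_pow {K : Type*} [Field K] [Fintype K] {j k : ℕ}
    (hj : j ≤ Fintype.card K - 1) (hjk : j + k < 2 * (Fintype.card K - 1)) (d : K) :
    ∑ a : K, a ^ j * (d - a) ^ k = d ^ ((j + k) % (Fintype.card K - 1))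
      * ((-1) ^ (j + 1) * (k.choose (Fintype.card K - 1 - j) : K)) := by
  have hsign := neg_one_pow_card_sub_one_sub hj
  have hpow : ∀ l ≤ k, ∑ a : K, a ^ (j + l) = if l = Fintype.card K - 1 - j then -1 else 0 := by
    intro l hl
    have hiff : j + l = Fintype.card K - 1 ↔ l = Fintype.card K - 1 - j := by omega
    simp only [sum_pow_of_lt_two_mul (show j + l < 2 * (Fintype.card K - 1) by omega), hiff]
  generalize Fintype.card K - 1 = Q at hj hjk hsign hpow ⊢
  rw [sum_pow_mul_sub_pow_eq_sum_range]
  rcases le_or_gt (Q - j) k with hle | hlt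
  · have hmod : (j + k) % Q = k - (Q - j) := by
      rw [Nat.mod_eq_sub_mod (by omega), Nat.mod_eq_of_lt (by omega)]
      omega
    rw [Finset.sum_eq_single_of_mem (Q - j) (Finset.mem_range_succ_iff.mpr hle) fun l hl hne ↦ by
        rw [hpow l (Finset.mem_range_succ_iff.mp hl), if_neg hne, mul_zero],
      hpow _ hle, if_pos rfl, hsign, hmod]
    ring
  · rw [Nat.choose_eq_zero_of_lt hlt, Nat.cast_zero, mul_zero, mul_zero]
    refine Finset.sum_eq_zero fun l hl ↦ ?_
    have hlk : l ≤ k := Finset.mem_range_succ_iff.mp hl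
    rw [hpow l hlk, if_neg (by omega), mul_zero]

section ResidueRings

theorem card_adjoinRoot {R : Type*} [CommRing R] [Fintype R] {p : R[X]} [Fintype (AdjoinRoot p)]
    (hp : p.Monic) : Fintype.card (AdjoinRoot p) = Fintype.card R ^ p.natDegree := by
  rw [Module.card_fintype (AdjoinRoot.powerBasisAux' hp), Fintype.card_fin]

theorem pairwise_isCoprime_of_monic_irreducible {ι F : Type*} [Field F] {p : ι → F[X]}
    (hmonic : ∀ i, (p i).Monic) (hirr : ∀ i, Irreducible (p i)) (hinj : Function.Injective p) :
    Pairwise (Function.onFun IsCoprime p) := by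
  refine fun i i' hne ↦ ((hirr i).coprime_iff_not_dvd).mpr fun hdvd ↦ hinj.ne hne ?_
  exact eq_of_monic_of_associated (hmonic i) (hmonic i') ((hirr i).associated_of_dvd (hirr i') hdvd)

theorem bijective_mk_toPoly {F : Type} [Field F] {n : F[X]} (hn : n.Monic) :
    Function.Bijective fun c : Fin n.natDegree → F ↦ AdjoinRoot.mk n (toPoly c) := by
  simp only [toPoly, C_mul_X_pow_eq_monomial]
  exact (AdjoinRoot.powerBasisAux' hn).equivFun.symm.bijective

variable {ι : Type*} [Fintype ι] {F : Type} [Field F] {p : ι → F[X]}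

theorem bijective_pi_mk_toPoly (hmonic : ∀ i, (p i).Monic)
    (hcop : Pairwise (Function.onFun IsCoprime p)) :
    Function.Bijective fun (c : Fin (∏ i, p i).natDegree → F) i ↦
      AdjoinRoot.mk (p i) (toPoly c) := by
  have hbij := bijective_mk_toPoly (monic_prod_of_monic Finset.univ p fun i _ ↦ hmonic i)
  constructor
  · intro c c' h
    refine hbij.injective (AdjoinRoot.mk_eq_mk.mpr (Fintype.prod_dvd_of_coprime hcop fun i ↦ ?_))
    exact AdjoinRoot.mk_eq_mk.mp (congrFun h i)
  · intro x
    have hcop_span : Pairwise (Function.onFun IsCoprime fun i ↦ Ideal.span {p i}) :=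
      fun i i' hne ↦ (Ideal.isCoprime_span_singleton_iff _ _).mpr (hcop hne)
    obtain ⟨g, hg⟩ := Ideal.pi_quotient_surjective hcop_span x
    obtain ⟨c, hc⟩ := hbij.surjective (AdjoinRoot.mk _ g)
    refine ⟨c, funext fun i ↦ Eq.trans (AdjoinRoot.mk_eq_mk.mpr ?_) (hg i)⟩
    exact (Finset.dvd_prod_of_mem p (Finset.mem_univ i)).trans (AdjoinRoot.mk_eq_mk.mp hc)

theorem sum_prod_mk_toPoly [Fintype F] [∀ i, Fintype (AdjoinRoot (p i))] {M : Type*}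
    [CommSemiring M] (hmonic : ∀ i, (p i).Monic) (hcop : Pairwise (Function.onFun IsCoprime p))
    (f : ∀ i, AdjoinRoot (p i) → M) :
    ∑ c : Fin (∏ i, p i).natDegree → F, ∏ i, f i (AdjoinRoot.mk (p i) (toPoly c)) =
      ∏ i, ∑ x, f i x := by
  classical
  rw [Fintype.prod_sum]
  exact (bijective_pi_mk_toPoly hmonic hcop).sum_comp fun x : ∀ i, AdjoinRoot (p i) ↦ ∏ i, f i (x i)

end ResidueRings

theorem sum_map_pow_mul_sub_pow {K L : Type*} [Field K] [Fintype K] [CommRing L] (φ : K →+* L)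
    {j k : ℕ} (hj : j ≤ Fintype.card K - 1) (hjk : j + k < 2 * (Fintype.card K - 1)) (d : K) :
    ∑ x : K, φ x ^ j * (φ d - φ x) ^ k = φ d ^ ((j + k) % (Fintype.card K - 1))
      * ((-1) ^ (j + 1) * (k.choose (Fintype.card K - 1 - j) : L)) := by
  simpa only [map_sum, map_mul, map_pow, map_sub, map_neg, map_one, map_natCast] using
    congrArg φ (sum_pow_mul_sub_pow hj hjk d)

theorem neg_one_zpow_one_sub_natCast {L : Type*} [DivisionRing L] (m : ℕ) :
    (-1 : L) ^ (1 - m : ℤ) = (-1) ^ (m + 1) := by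
  rw [zpow_sub₀ (neg_ne_zero.mpr one_ne_zero), zpow_one, zpow_natCast, div_eq_mul_inv, ← inv_pow,
    inv_neg_one, pow_succ']

theorem stmt4_general {ι : Type*} [Fintype ι] {F : Type} [Field F] [Fintype F] {L : Type*}
    [CommRing L] [Algebra F L] {p : ι → F[X]} {ζ : ι → L} (hmonic : ∀ i, (p i).Monic)
    (hirr : ∀ i, Irreducible (p i)) (hinj : Function.Injective p)
    (hζ : ∀ i, aeval (ζ i) (p i) = 0) {j k : ι → ℕ}
    (hj : ∀ i, j i ≤ Fintype.card F ^ (p i).natDegree - 1)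
    (hjk : ∀ i, j i + k i < 2 * (Fintype.card F ^ (p i).natDegree - 1)) (δ : F[X]) :
    ∑ c : Fin (∏ i, p i).natDegree → F,
        (∏ i, aeval (ζ i) (toPoly c) ^ j i) * (∏ i, aeval (ζ i) (δ - toPoly c) ^ k i)
      = (∏ i, aeval (ζ i) δ ^ ((j i + k i) % (Fintype.card F ^ (p i).natDegree - 1)))
        * ∏ i, ((-1) ^ (j i + 1)
            * ((k i).choose (Fintype.card F ^ (p i).natDegree - 1 - j i) : L)) := by
  have (i : ι) : Fact (Irreducible (p i)) := ⟨hirr i⟩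
  have (i : ι) : Module.Finite F (AdjoinRoot (p i)) := (hmonic i).finite_adjoinRoot
  have (i : ι) : Finite (AdjoinRoot (p i)) := Module.finite_of_finite F
  let (i : ι) : Fintype (AdjoinRoot (p i)) := Fintype.ofFinite _
  let φ (i : ι) : AdjoinRoot (p i) →+* L := AdjoinRoot.lift (algebraMap F L) (ζ i) (hζ i)
  have haeval (i : ι) (a : F[X]) : aeval (ζ i) a = φ i (AdjoinRoot.mk (p i) a) :=
    (AdjoinRoot.lift_mk (hζ i) a).symm
  have hcop := pairwise_isCoprime_of_monic_irreducible hmonic hirr hinj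
  simp only [← Finset.prod_mul_distrib, ← card_adjoinRoot (hmonic _), haeval, map_sub] at hj hjk ⊢
  rw [sum_prod_mk_toPoly hmonic hcop fun i x ↦ φ i x ^ j i * (φ i (.mk (p i) δ) - φ i x) ^ k i]
  exact Finset.prod_congr rfl fun i _ ↦ sum_map_pow_mul_sub_pow (φ i) (hj i) (hjk i) _

/-- Convolution of two Dirichlet characters of the same square-free conductor
`n = p₁⋯p_r` (function-field Jacobi sums):
`∑_{deg a < deg n} χ₁(a) χ₂(δ − a) = (χ₁χ₂)(δ) ∏_i (−1)^{1−j_i} C(k_i, |p_i|−1−j_i)`. -/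
theorem stmt4 {F : Type} [Field F] [Fintype F] {L : Type} [Field L] [Algebra F L]
    {r : ℕ} (p : Fin r → Polynomial F) (ζ : Fin r → L)
    (hp : ∀ i, (p i).Monic ∧ Irreducible (p i))
    (hdist : ∀ i i', i ≠ i' → p i ≠ p i')
    (hζ : ∀ i, Polynomial.aeval (ζ i) (p i) = 0)
    (n : Polynomial F) (hn : n = ∏ i, p i)
    (j k : Fin r → ℕ)
    (hj : ∀ i, 1 ≤ j i ∧ j i < Fintype.card F ^ (p i).natDegree - 1)
    (hk : ∀ i, 1 ≤ k i ∧ k i < Fintype.card F ^ (p i).natDegree - 1)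
    (δ : Polynomial F) (hδ : δ.degree < n.degree) :
    ∑ c : Fin n.natDegree → F,
        (∏ i, Polynomial.aeval (ζ i) (toPoly c) ^ j i)
          * (∏ i, Polynomial.aeval (ζ i) (δ - toPoly c) ^ k i)
      = (∏ i, Polynomial.aeval (ζ i) δ
            ^ ((j i + k i) % (Fintype.card F ^ (p i).natDegree - 1)))
        * ∏ i, ((-1 : L) ^ ((1 : ℤ) - (j i : ℤ))
            * (Nat.choose (k i) (Fintype.card F ^ (p i).natDegree - 1 - j i) : L)) := by
  subst hn
  simpa only [neg_one_zpow_one_sub_natCast] using stmt4_general (fun i ↦ (hp i).1)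
    (fun i ↦ (hp i).2) (fun i i' ↦ not_imp_not.mp (hdist i i')) hζ (fun i ↦ (hj i).2.le)
    (fun i ↦ by linarith [(hj i).2, (hk i).2]) δ
end
end

section
/- Let n ∈ A be monic and let q ∈ A be monic irreducible with q coprime to n, and choose q* ∈ A with q·q* ≡ 1 (mod n). For α ∈ A with deg α < deg n, write α·q* = k*·n + r* with k*, r* ∈ A and deg r* < deg n. Then α·(1 − q·q*)/n ∈ A, and one has the matrix identity (n α; 0 n)·(q 0; 0 1) = (1, α(1 − qq*)/n; 0, 1)·(q 0; 0 1)·(1 k*; 0 1)·(n r*; 0 n) in GL₂(K); the assignment α ↦ r* is a bijection of {α ∈ A : deg α < deg n} onto itself sending 0 to 0; and for every Dirichlet character χ modulo a square-free monic divisor of n with χ(q) ≠ 0 one has χ(q)·χ(r*) = χ(α). -/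
open Polynomial Matrix

noncomputable section

/-- The inclusion of matrices over `A = 𝔽_q[θ]` into matrices over `K = 𝔽_q(θ)`. -/
def mat2K {F : Type} [Field F] (γ : Matrix (Fin 2) (Fin 2) (Polynomial F)) :
    Matrix (Fin 2) (Fin 2) (RatFunc F) :=
  γ.map (algebraMap (Polynomial F) (RatFunc F))

/-!
Multiplication by `q*` modulo `n` inverts multiplication by `q`; in particular `q r* ≡ α (mod n)`.
This congruence gives both the bijection, with inverse `β ↦ q β mod n`, and the relation
`χ(q) χ(r*) = χ(α)` for every multiplicative `χ` that is periodic modulo `n`. In the matrix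
identity only the upper right entry, `α = q r* + (q k* + v) n`, uses the division with remainder.
-/

section CommRing

variable {R : Type*} [CommRing R]

theorem mul_diag_eq_unipotent_mul_diag_mul_unipotent_mul {n q q' α k r v : R}
    (hk : α * q' = k * n + r) (hv : α * (1 - q * q') = n * v) :
    !![n, α; 0, n] * !![q, 0; 0, 1]
      = !![1, v; 0, 1] * !![q, 0; 0, 1] * !![1, k; 0, 1] * !![n, r; 0, n] := by
  have upper_right : α = q * r + (q * k + v) * n := by linear_combination q * hk + hv
  simp only [Matrix.mul_fin_two, mul_zero, zero_mul, mul_one, one_mul, add_zero, zero_add]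
  rw [← upper_right, mul_comm n q]

theorem dvd_mul_mul_modByMonic_sub {n q q' : R[X]} (hqq' : n ∣ q * q' - 1) (α : R[X]) :
    n ∣ q * (α * q' %ₘ n) - α := by
  have hmod : n ∣ α * q' %ₘ n - α * q' := dvd_modByMonic_sub _ _
  convert (hmod.mul_left q).add (hqq'.mul_left α) using 1
  ring

theorem leftInvOn_mul_modByMonic [Nontrivial R] {n q q' : R[X]} (hn : n.Monic)
    (hqq' : n ∣ q * q' - 1) :
    Set.LeftInvOn (fun β ↦ β * q %ₘ n) (fun α ↦ α * q' %ₘ n) {α | α.degree < n.degree} := by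
  intro α hα
  have hcongr : n ∣ (α * q' %ₘ n) * q - α := mul_comm q _ ▸ dvd_mul_mul_modByMonic_sub hqq' α
  exact (modByMonic_eq_of_dvd_sub hn hcongr).trans ((modByMonic_eq_self_iff hn).2 hα)

theorem bijOn_mul_modByMonic [Nontrivial R] {n q q' : R[X]} (hn : n.Monic)
    (hqq' : n ∣ q * q' - 1) :
    Set.BijOn (fun α ↦ α * q' %ₘ n) {α | α.degree < n.degree} {α | α.degree < n.degree} :=
  Set.InvOn.bijOn
    ⟨leftInvOn_mul_modByMonic hn hqq', leftInvOn_mul_modByMonic hn (mul_comm q q' ▸ hqq')⟩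
    (fun _ _ ↦ degree_modByMonic_lt _ hn) (fun _ _ ↦ degree_modByMonic_lt _ hn)

end CommRing

section DirichletChar

variable {R L ι : Type*} [CommRing R] [CommRing L] [Algebra R L] [Fintype ι]

/-- The Dirichlet character `χ_{ζ₁}^{e₁} ⋯ χ_{ζ_r}^{e_r}` on `R[X]`, where `χ_ζ` is evaluation
at `ζ`. No modulus is recorded, and `χ_ζ ^ 0` is `1` everywhere, also at polynomials vanishing
at `ζ`. -/
def dirichletChar (ζ : ι → L) (e : ι → ℕ) : R[X] →* L :=
  ∏ i, (aeval (R := R) (ζ i) : R[X] →* L) ^ e i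

theorem dirichletChar_apply (ζ : ι → L) (e : ι → ℕ) (a : R[X]) :
    dirichletChar ζ e a = ∏ i, aeval (ζ i) a ^ e i := by
  simp [dirichletChar]

theorem dirichletChar_eq_of_dvd_sub {p : ι → R[X]} {ζ : ι → L} {n a b : R[X]}
    (hζ : ∀ i, aeval (ζ i) (p i) = 0) (hpn : ∏ i, p i ∣ n) (e : ι → ℕ) (hab : n ∣ a - b) :
    dirichletChar ζ e a = dirichletChar ζ e b := by
  have haeval (i : ι) : aeval (ζ i) a = aeval (ζ i) b := by
    have hp : p i ∣ a - b := ((Finset.dvd_prod_of_mem p (Finset.mem_univ i)).trans hpn).trans hab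
    exact sub_eq_zero.1 <| map_sub (aeval (ζ i)) a b ▸ aeval_eq_zero_of_dvd_aeval_eq_zero hp (hζ i)
  simp only [dirichletChar_apply, haeval]

end DirichletChar

theorem stmt12_general {R M : Type*} [CommRing R] [Nontrivial R] [Monoid M]
    {B : Type*} [Semiring B] (φ : R[X] →+* B) {n q q' : R[X]} (hn : n.Monic)
    (hqq' : n ∣ q * q' - 1) :
    ∃ r : R[X] → R[X],
      (∀ α : R[X], ∃ k v : R[X],
        (r α).degree < n.degree ∧ α * q' = k * n + r α ∧ α * (1 - q * q') = n * v
        ∧ φ.mapMatrix !![n, α; 0, n] * φ.mapMatrix !![q, 0; 0, 1]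
            = φ.mapMatrix !![1, v; 0, 1] * φ.mapMatrix !![q, 0; 0, 1]
              * φ.mapMatrix !![1, k; 0, 1] * φ.mapMatrix !![n, r α; 0, n])
      ∧ r 0 = 0
      ∧ Set.BijOn r {α | α.degree < n.degree} {α | α.degree < n.degree}
      ∧ ∀ χ : R[X] →* M, (∀ a b, n ∣ a - b → χ a = χ b) → ∀ α, χ q * χ (r α) = χ α := by
  refine ⟨fun α ↦ α * q' %ₘ n, fun α ↦ ?_, by simp, bijOn_mul_modByMonic hn hqq',
    fun χ hχ α ↦ ?_⟩
  · have hk : α * q' = α * q' /ₘ n * n + α * q' %ₘ n := by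
      rw [add_comm, mul_comm _ n, modByMonic_add_div]
    obtain ⟨v, hv⟩ : n ∣ α * (1 - q * q') := (dvd_sub_comm.1 hqq').mul_left α
    refine ⟨_, v, degree_modByMonic_lt _ hn, hk, hv, ?_⟩
    simpa only [map_mul] using
      congrArg φ.mapMatrix (mul_diag_eq_unipotent_mul_diag_mul_unipotent_mul hk hv)
  · rw [← map_mul]
    exact hχ _ _ (dvd_mul_mul_modByMonic_sub hqq' α)

/-- Let `n` be monic, `q` monic irreducible coprime to `n`, and `q·q* ≡ 1 (mod n)`.
Writing `α·q* = k*·n + r*` with `deg r* < deg n` (so `r* = R α`), one has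
`α(1 − qq*)/n ∈ A` (say `= v`) and the matrix identity
`(n α; 0 n)(q 0; 0 1) = (1 v; 0 1)(q 0; 0 1)(1 k*; 0 1)(n r*; 0 n)` in `GL₂(K)`;
`α ↦ r*` is a bijection of `{α : deg α < deg n}` onto itself sending `0` to `0`; and for
every Dirichlet character `χ` modulo a square-free monic divisor of `n` with `χ(q) ≠ 0`
one has `χ(q)·χ(r*) = χ(α)`. -/
theorem stmt12 {F : Type} [Field F] [Fintype F] {L : Type} [Field L] [Algebra F L]
    (n : Polynomial F) (hn : n.Monic)
    (q : Polynomial F) (hq : q.Monic) (hqirr : Irreducible q)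
    (hcop : IsCoprime q n)
    (qstar : Polynomial F) (hqstar : n ∣ (q * qstar - 1)) :
    ∃ R : Polynomial F → Polynomial F,
      (∀ α : Polynomial F, α.degree < n.degree →
        ∃ k v : Polynomial F,
          (R α).degree < n.degree ∧ α * qstar = k * n + R α
          ∧ α * (1 - q * qstar) = n * v
          ∧ mat2K !![n, α; 0, n] * mat2K !![q, 0; 0, 1]
              = mat2K !![1, v; 0, 1] * mat2K !![q, 0; 0, 1] * mat2K !![1, k; 0, 1]
                * mat2K !![n, R α; 0, n])
      ∧ R 0 = 0
      ∧ Set.BijOn R {α : Polynomial F | α.degree < n.degree}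
          {α : Polynomial F | α.degree < n.degree}
      ∧ (∀ (s : ℕ) (p : Fin s → Polynomial F) (ζ : Fin s → L) (e : Fin s → ℕ),
          (∀ i, (p i).Monic ∧ Irreducible (p i)) →
          (∀ i i', i ≠ i' → p i ≠ p i') →
          (∀ i, Polynomial.aeval (ζ i) (p i) = 0) →
          (∀ i, e i < Fintype.card F ^ (p i).natDegree - 1) →
          (∏ i, p i) ∣ n →
          (∏ i, Polynomial.aeval (ζ i) q ^ e i) ≠ 0 →
          ∀ α : Polynomial F, α.degree < n.degree →
            (∏ i, Polynomial.aeval (ζ i) q ^ e i)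
                * (∏ i, Polynomial.aeval (ζ i) (R α) ^ e i)
              = ∏ i, Polynomial.aeval (ζ i) α ^ e i) := by
  obtain ⟨R, hR, hR0, hbij, hχ⟩ := stmt12_general (M := L) (algebraMap F[X] (RatFunc F)) hn hqstar
  exact ⟨R, fun α _ ↦ hR α, hR0, hbij, fun _ _ ζ e _ _ hζ _ hpn _ α _ ↦ by
    simpa only [dirichletChar_apply] using
      hχ (dirichletChar ζ e) (fun _ _ ↦ dirichletChar_eq_of_dvd_sub hζ hpn e) α⟩
end
end
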